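/- Let B be an inner function. Then (1−|z|)^{−1}|B′(z)| belongs to weak L^1 of the unit disc with respect to area measure (i.e. there is C > 0 with Area{z : |B′(z)| > λ(1−|z|)} ≤ C/λ for all λ > 0) if and only if B is a finite Blaschke product. -/

import Mathlib

open MeasureTheory Real Set Filter

noncomputable section

/-- Inner function: bounded holomorphic on the unit disc with unimodular radial limits a.e. -/
def IsInner (B : ℂ → ℂ) : Prop :=
  DifferentiableOn ℂ B (Metric.ball 0 1) ∧ (∀ z ∈ Metric.ball (0:ℂ) 1, ‖B z‖ ≤ 1) ∧
  ∀ᵐ (θ : ℝ) ∂(volume.restrict (Set.Ico (0:ℝ) (2*π))),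
    Filter.Tendsto (fun r : ℝ => ‖B ((r:ℂ) * Complex.exp ((θ:ℂ) * Complex.I))‖)
      (nhdsWithin 1 (Set.Iio 1)) (nhds 1)

/-- `B` is a finite Blaschke product. -/
def IsFiniteBlaschkeProduct (B : ℂ → ℂ) : Prop :=
  ∃ (ξ : ℂ) (n : ℕ) (a : Fin n → ℂ), ‖ξ‖ = 1 ∧ (∀ i, ‖a i‖ < 1) ∧
    ∀ z ∈ Metric.ball (0:ℂ) 1,
      B z = ξ * ∏ i, (a i - z) / (1 - (starRingEnd ℂ) (a i) * z)

lemma exp_orth (m n : ℕ) :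
    ∫ θ in (0:ℝ)..2 * π, Complex.exp (θ * Complex.I) ^ m *
      (starRingEnd ℂ) (Complex.exp (θ * Complex.I) ^ n) = if m = n then ((2 * π : ℝ) : ℂ) else 0 := by
  have h1 : ∀ θ : ℝ, Complex.exp (θ * Complex.I) ^ m *
      (starRingEnd ℂ) (Complex.exp (θ * Complex.I) ^ n) =
      Complex.exp ((((m:ℂ) - n) * Complex.I) * θ) := by
    intro θ
    rw [map_pow, ← Complex.exp_conj, ← Complex.exp_nat_mul, ← Complex.exp_nat_mul, ← Complex.exp_add]
    congr 1
    simp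
    ring
  simp_rw [h1]
  split_ifs with h
  · subst h; simp
  · rw [integral_exp_mul_complex]
    · have : ((m:ℂ) - n) * Complex.I * ((2 * π : ℝ) : ℂ) = ((m:ℤ) - (n:ℤ) : ℤ) * (2 * π * Complex.I) := by
        push_cast; ring
      rw [this, Complex.exp_int_mul_two_pi_mul_I]
      simp
    · apply mul_ne_zero _ Complex.I_ne_zero
      rw [sub_ne_zero]
      exact_mod_cast h

/-- Parseval for absolutely convergent power series on the unit circle. -/
lemma parseval {a c : ℕ → ℂ} {F G : ℝ → ℂ} (ha : Summable fun n => ‖a n‖)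
    (hc : Summable fun n => ‖c n‖)
    (hF : ∀ θ : ℝ, HasSum (fun n => a n * Complex.exp (θ * Complex.I) ^ n) (F θ))
    (hG : ∀ θ : ℝ, HasSum (fun n => c n * Complex.exp (θ * Complex.I) ^ n) (G θ))
    (hGc : Continuous G) :
    HasSum (fun n => ((2 * π : ℝ) : ℂ) * (a n * (starRingEnd ℂ) (c n)))
      (∫ θ in (0:ℝ)..2 * π, F θ * (starRingEnd ℂ) (G θ)) := by
  have hcont : ∀ n : ℕ, Continuous fun θ : ℝ => Complex.exp (θ * Complex.I) ^ n := by
    intro n; fun_prop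
  have hn : ∀ (θ : ℝ) (n : ℕ), ‖Complex.exp (θ * Complex.I) ^ n‖ = 1 := by
    intro θ n; rw [norm_pow, Complex.norm_exp_ofReal_mul_I, one_pow]
  have hGb : ∀ θ, ‖G θ‖ ≤ ∑' n, ‖c n‖ := by
    intro θ
    refine (hG θ).norm_le_of_bounded hc.hasSum ?_
    intro n; rw [norm_mul, hn, mul_one]
  -- inner coefficient
  have hcoef : ∀ m : ℕ, ∫ θ in (0:ℝ)..2 * π, a m * Complex.exp (θ * Complex.I) ^ m *
      (starRingEnd ℂ) (G θ) = ((2 * π : ℝ) : ℂ) * (a m * (starRingEnd ℂ) (c m)) := by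
    intro m
    have hs : HasSum (fun n => ∫ θ in (0:ℝ)..2 * π, a m * Complex.exp (θ * Complex.I) ^ m *
        (starRingEnd ℂ) (c n * Complex.exp (θ * Complex.I) ^ n))
        (∫ θ in (0:ℝ)..2 * π, a m * Complex.exp (θ * Complex.I) ^ m * (starRingEnd ℂ) (G θ)) := by
      apply intervalIntegral.hasSum_integral_of_dominated_convergence
        (fun n _ => ‖a m‖ * ‖c n‖)
      · intro n
        apply Continuous.aestronglyMeasurable
        have := hcont m
        have := hcont n
        have := Complex.continuous_conj
        fun_prop
      · intro n
        filter_upwards with θ _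
        rw [norm_mul, norm_mul, RCLike.norm_conj, norm_mul, hn, hn, mul_one, mul_one]
      · filter_upwards with θ _
        exact hc.mul_left _
      · exact intervalIntegrable_const
      · filter_upwards with θ _
        have := ((hG θ).map (starRingEnd ℂ) Complex.continuous_conj).mul_left
          (a m * Complex.exp (θ * Complex.I) ^ m)
        exact this
    have e : ∀ n, ∫ θ in (0:ℝ)..2 * π, a m * Complex.exp (θ * Complex.I) ^ m *
        (starRingEnd ℂ) (c n * Complex.exp (θ * Complex.I) ^ n) =
        if m = n then ((2 * π : ℝ) : ℂ) * (a m * (starRingEnd ℂ) (c m)) else 0 := by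
      intro n
      have e1 : ∀ θ : ℝ, a m * Complex.exp (θ * Complex.I) ^ m *
        (starRingEnd ℂ) (c n * Complex.exp (θ * Complex.I) ^ n) =
        (a m * (starRingEnd ℂ) (c n)) * (Complex.exp (θ * Complex.I) ^ m *
          (starRingEnd ℂ) (Complex.exp (θ * Complex.I) ^ n)) := by
        intro θ; rw [map_mul]; ring
      simp_rw [e1]
      rw [intervalIntegral.integral_const_mul, exp_orth]
      split_ifs with h
      · subst h; ring
      · simp
    simp_rw [e] at hs
    refine hs.unique ?_
    have := hasSum_ite_eq m (((2 * π : ℝ) : ℂ) * (a m * (starRingEnd ℂ) (c m)))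
    simpa [eq_comm] using this
  simp_rw [← hcoef]
  apply intervalIntegral.hasSum_integral_of_dominated_convergence
    (fun n _ => ‖a n‖ * ∑' n, ‖c n‖)
  · intro n
    apply Continuous.aestronglyMeasurable
    have := hcont n
    have := Complex.continuous_conj
    fun_prop
  · intro n
    filter_upwards with θ _
    rw [norm_mul, norm_mul, RCLike.norm_conj, hn, mul_one]
    gcongr
    exact hGb θ
  · filter_upwards with θ _
    exact ha.mul_right _
  · exact intervalIntegrable_const
  · filter_upwards with θ _
    exact (hF θ).mul_right _

/-- Taylor coefficients at the origin. -/
def coef (B : ℂ → ℂ) (n : ℕ) : ℂ := ((n.factorial : ℂ))⁻¹ * iteratedDeriv n B 0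

lemma coef_hasSum {B : ℂ → ℂ} (hd : DifferentiableOn ℂ B (Metric.ball 0 1)) {z : ℂ}
    (hz : ‖z‖ < 1) : HasSum (fun n => coef B n * z ^ n) (B z) := by
  have := Complex.hasSum_taylorSeries_on_ball hd (z := z) (by simpa using hz)
  have e : (fun n => coef B n * z ^ n) =
      fun n : ℕ => ((n.factorial : ℂ))⁻¹ • (z - 0) ^ n • iteratedDeriv n B 0 := by
    ext n
    simp only [coef, smul_eq_mul, sub_zero]
    ring
  rw [e]; exact this

lemma coef_deriv_hasSum {B : ℂ → ℂ} (hd : DifferentiableOn ℂ B (Metric.ball 0 1)) {z : ℂ}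
    (hz : ‖z‖ < 1) : HasSum (fun n : ℕ => (n * coef B n) * z ^ n) (z * deriv B z) := by
  have := (coef_hasSum (hd.deriv Metric.isOpen_ball) hz).mul_left z
  have h2 : HasSum (fun n : ℕ => (((n + 1 : ℕ) : ℂ) * coef B (n + 1)) * z ^ (n + 1)) (z * deriv B z) := by
    have e : (fun n : ℕ => (((n + 1 : ℕ) : ℂ) * coef B (n + 1)) * z ^ (n + 1)) =
        fun n => z * (coef (deriv B) n * z ^ n) := by
      ext n
      rw [coef, coef, iteratedDeriv_succ', Nat.factorial_succ]
      push_cast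
      have : (n : ℂ) + 1 ≠ 0 := by exact_mod_cast n.succ_ne_zero
      have h3 : (n.factorial : ℂ) ≠ 0 := by exact_mod_cast n.factorial_ne_zero
      field_simp
      ring
    rw [e]; exact this
  have h3 := (hasSum_nat_add_iff (f := fun n : ℕ => ((n : ℂ) * coef B n) * z ^ n) 1).1 h2
  simpa using h3

lemma norm_rexp {r : ℝ} (h0 : 0 ≤ r) (θ : ℝ) : ‖(r : ℂ) * Complex.exp (θ * Complex.I)‖ = r := by
  rw [norm_mul, Complex.norm_exp_ofReal_mul_I, mul_one, Complex.norm_real, Real.norm_of_nonneg h0]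

lemma cont_circle {f : ℂ → ℂ} (hd : DifferentiableOn ℂ f (Metric.ball 0 1)) {r : ℝ}
    (h0 : 0 ≤ r) (h1 : r < 1) :
    Continuous fun θ : ℝ => f ((r : ℂ) * Complex.exp (θ * Complex.I)) := by
  apply hd.continuousOn.comp_continuous (by fun_prop)
  intro θ
  rw [mem_ball_zero_iff, norm_rexp h0]
  exact h1

lemma mean_deriv_lower {B : ℂ → ℂ} (hd : DifferentiableOn ℂ B (Metric.ball 0 1))
    (hb : ∀ z ∈ Metric.ball (0:ℂ) 1, ‖B z‖ ≤ 1) {r : ℝ} (h0 : 0 ≤ r) (h1 : r < 1) (N : ℕ) :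
    2 * π * ∑ n ∈ Finset.range N, n * ‖coef B n‖ ^ 2 * r ^ (2 * n) ≤
      ∫ θ in (0:ℝ)..2 * π, r * ‖deriv B ((r : ℂ) * Complex.exp (θ * Complex.I))‖ := by
  have hr : ‖(r : ℂ)‖ < 1 := by rw [Complex.norm_real, Real.norm_of_nonneg h0]; exact h1
  have hzz : ∀ θ : ℝ, ‖(r : ℂ) * Complex.exp (θ * Complex.I)‖ < 1 := by
    intro θ; rw [norm_rexp h0]; exact h1
  have hd' := hd.deriv Metric.isOpen_ball
  have P := parseval (a := fun n : ℕ => (n * coef B n) * (r : ℂ) ^ n)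
    (c := fun n : ℕ => coef B n * (r : ℂ) ^ n)
    (F := fun θ => ((r : ℂ) * Complex.exp (θ * Complex.I)) *
      deriv B ((r : ℂ) * Complex.exp (θ * Complex.I)))
    (G := fun θ => B ((r : ℂ) * Complex.exp (θ * Complex.I)))
    (coef_deriv_hasSum hd hr).summable.norm (coef_hasSum hd hr).summable.norm
    (fun θ => by
      convert coef_deriv_hasSum hd (hzz θ) using 2 with n
      rw [mul_pow]; ring)
    (fun θ => by
      convert coef_hasSum hd (hzz θ) using 2 with n
      rw [mul_pow]; ring)
    (cont_circle hd h0 h1)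
  have P2 := Complex.hasSum_re P
  have e : ∀ n : ℕ, (((2 * π : ℝ) : ℂ) * ((n * coef B n) * (r : ℂ) ^ n *
      (starRingEnd ℂ) (coef B n * (r : ℂ) ^ n))).re = 2 * π * (n * ‖coef B n‖ ^ 2 * r ^ (2 * n)) := by
    intro n
    have : ((2 * π : ℝ) : ℂ) * ((n * coef B n) * (r : ℂ) ^ n *
      (starRingEnd ℂ) (coef B n * (r : ℂ) ^ n)) =
      ((2 * π * (n * ‖coef B n‖ ^ 2 * r ^ (2 * n)) : ℝ) : ℂ) := by
      rw [map_mul, map_pow, Complex.conj_ofReal]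
      have h := Complex.mul_conj' (coef B n)
      push_cast
      rw [← h]
      ring
    rw [this, Complex.ofReal_re]
  simp only [e] at P2
  rw [Finset.mul_sum]
  refine (sum_le_hasSum _ (fun n _ => by positivity) P2).trans ?_
  refine (Complex.re_le_norm _).trans ?_
  refine intervalIntegral.norm_integral_le_of_norm_le (by positivity) ?_ ?_
  · filter_upwards with θ _
    rw [norm_mul, RCLike.norm_conj, norm_mul, norm_rexp h0]
    have := hb _ (mem_ball_zero_iff.2 (hzz θ))
    exact mul_le_of_le_one_right (by positivity) this
  · exact (continuous_const.mul (cont_circle hd' h0 h1).norm).intervalIntegrable _ _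

lemma deriv_le {B : ℂ → ℂ} (hd : DifferentiableOn ℂ B (Metric.ball 0 1))
    (hb : ∀ z ∈ Metric.ball (0:ℂ) 1, ‖B z‖ ≤ 1) {z : ℂ} (hz : ‖z‖ < 1) :
    ‖deriv B z‖ ≤ 2 / (1 - ‖z‖) := by
  have h1 : 0 < (1 - ‖z‖) / 2 := by linarith
  have hsub : Metric.closedBall z ((1 - ‖z‖) / 2) ⊆ Metric.ball 0 1 := by
    intro w hw
    rw [mem_ball_zero_iff]
    rw [mem_closedBall_iff_norm] at hw
    have := norm_add_le (w - z) z
    rw [sub_add_cancel] at this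
    linarith
  have := Complex.norm_deriv_le_of_forall_mem_sphere_norm_le (c := z) (C := 1) (f := B) h1
    (by
      apply DifferentiableOn.diffContOnCl
      rw [closure_ball _ h1.ne']
      exact hd.mono hsub)
    (fun w hw => hb w (hsub (Metric.sphere_subset_closedBall hw)))
  refine this.trans (le_of_eq ?_)
  field_simp

lemma area_upper {B : ℂ → ℂ} (hd : DifferentiableOn ℂ B (Metric.ball 0 1))
    (hb : ∀ z ∈ Metric.ball (0:ℂ) 1, ‖B z‖ ≤ 1) {C : ℝ} (hC : 0 < C)
    (hw : ∀ lam > (0:ℝ), volume {z ∈ Metric.ball (0:ℂ) 1 | lam * (1 - ‖z‖) < ‖deriv B z‖}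
        ≤ ENNReal.ofReal (C / lam)) {σ : ℝ} (hσ0 : 0 < σ) (hσ1 : σ < 1) :
    ∫⁻ z in Metric.ball (0:ℂ) (1 - σ), ENNReal.ofReal (‖deriv B z‖ / (1 - ‖z‖)) ≤
      ENNReal.ofReal (π + C * Real.log (2 / σ ^ 2)) := by
  set Λ : ℝ := 2 / σ ^ 2 with hΛ
  have hΛ1 : 1 ≤ Λ := by
    rw [hΛ, le_div_iff₀ (by positivity)]
    nlinarith
  have hmeas : Measurable fun z : ℂ => ‖deriv B z‖ / (1 - ‖z‖) := by
    have := measurable_deriv B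
    fun_prop
  have hmem : ∀ᵐ z ∂(volume.restrict (Metric.ball (0:ℂ) (1 - σ))), ‖z‖ < 1 - σ := by
    filter_upwards [ae_restrict_mem Metric.isOpen_ball.measurableSet] with z hz
    simpa using hz
  rw [lintegral_eq_lintegral_meas_lt _ ?_ hmeas.aemeasurable]
  · have hcover : Ioi (0:ℝ) ⊆ (Ioc 0 1 ∪ Ioc 1 Λ) ∪ Ioi Λ := by
      intro t ht
      simp only [mem_union, mem_Ioc, mem_Ioi] at *
      grind
    refine (lintegral_mono_set hcover).trans ?_
    refine (lintegral_union_le _ _ _).trans ?_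
    refine (add_le_add_left (lintegral_union_le _ _ _) _).trans ?_
    have hpi : volume (Metric.ball (0:ℂ) 1) = ENNReal.ofReal π := by
      rw [Complex.volume_ball, ← NNReal.coe_real_pi, ENNReal.ofReal_coe_nnreal]; simp
    have I1 : ∫⁻ t in Ioc (0:ℝ) 1, (volume.restrict (Metric.ball (0:ℂ) (1 - σ)))
        {z | t < ‖deriv B z‖ / (1 - ‖z‖)} ≤ ENNReal.ofReal π := by
      calc _ ≤ ∫⁻ t in Ioc (0:ℝ) 1, ENNReal.ofReal π := by
            apply lintegral_mono
            intro t
            refine (measure_mono (subset_univ _)).trans ?_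
            rw [Measure.restrict_apply_univ, ← hpi]
            exact measure_mono (Metric.ball_subset_ball (by linarith))
        _ = _ := by simp
    have I2 : ∫⁻ t in Ioc (1:ℝ) Λ, (volume.restrict (Metric.ball (0:ℂ) (1 - σ)))
        {z | t < ‖deriv B z‖ / (1 - ‖z‖)} ≤ ENNReal.ofReal (C * Real.log Λ) := by
      have hint : IntervalIntegrable (fun t : ℝ => C * t⁻¹) volume 1 Λ := by
        apply ContinuousOn.intervalIntegrable
        apply ContinuousOn.mul continuousOn_const
        apply ContinuousOn.inv₀ continuousOn_id
        intro t ht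
        rw [uIcc_of_le hΛ1] at ht
        simp only [id]
        linarith [ht.1]
      calc _ ≤ ∫⁻ t in Ioc (1:ℝ) Λ, ENNReal.ofReal (C * t⁻¹) := by
            apply setLIntegral_mono' measurableSet_Ioc
            intro t ht
            have ht0 : 0 < t := by linarith [ht.1]
            have := hw t ht0
            rw [div_eq_mul_inv] at this
            refine le_trans ?_ this
            rw [Measure.restrict_apply (measurableSet_lt measurable_const hmeas)]
            apply measure_mono
            rintro z ⟨hz1, hz2⟩
            have hz3 : ‖z‖ < 1 - σ := by simpa using hz2
            refine ⟨by simpa using hz3.trans (by linarith), ?_⟩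
            exact (lt_div_iff₀ (by linarith)).1 hz1
        _ = ENNReal.ofReal (∫ t in (1:ℝ)..Λ, C * t⁻¹) := by
            rw [intervalIntegral.integral_of_le hΛ1, ofReal_integral_eq_lintegral_ofReal]
            · exact hint.1
            · filter_upwards [ae_restrict_mem measurableSet_Ioc] with t ht
              have : 0 < t := by linarith [ht.1]
              simp only [Pi.zero_apply]
              positivity
        _ = _ := by
            rw [intervalIntegral.integral_const_mul, integral_inv_of_pos one_pos (by linarith), div_one]
    have I3 : ∫⁻ t in Ioi Λ, (volume.restrict (Metric.ball (0:ℂ) (1 - σ)))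
        {z | t < ‖deriv B z‖ / (1 - ‖z‖)} = 0 := by
      rw [setLIntegral_congr_fun (g := fun _ => 0) measurableSet_Ioi]
      · simp
      intro t ht
      simp only
      rw [measure_eq_zero_iff_ae_notMem]
      filter_upwards [hmem] with z hz
      simp only [not_lt]
      refine le_trans ?_ (le_of_lt ht)
      have h1 := deriv_le hd hb (z := z) (by linarith)
      have h2 : 0 < 1 - ‖z‖ := by linarith
      calc ‖deriv B z‖ / (1 - ‖z‖) ≤ (2 / (1 - ‖z‖)) / (1 - ‖z‖) := by gcongr
        _ = 2 / (1 - ‖z‖) ^ 2 := by rw [div_div, sq]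
        _ ≤ Λ := by rw [hΛ]; gcongr; linarith
    rw [I3, add_zero, ENNReal.ofReal_add Real.pi_pos.le (mul_nonneg hC.le (Real.log_nonneg hΛ1))]
    exact add_le_add I1 I2
  · filter_upwards [hmem] with z hz
    simp only [Pi.zero_apply]
    exact div_nonneg (norm_nonneg _) (by linarith)

lemma area_lower {B : ℂ → ℂ} (hd : DifferentiableOn ℂ B (Metric.ball 0 1))
    (hb : ∀ z ∈ Metric.ball (0:ℂ) 1, ‖B z‖ ≤ 1) {r0 σ : ℝ} (h0 : 0 < r0) (hσ0 : 0 < σ)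
    (hσ1 : r0 < 1 - σ) (N : ℕ) :
    ENNReal.ofReal (2 * π * (∑ n ∈ Finset.range N, n * ‖coef B n‖ ^ 2 * r0 ^ (2 * n)) *
      Real.log ((1 - r0) / σ)) ≤
    ∫⁻ z in Metric.ball (0:ℂ) (1 - σ), ENNReal.ofReal (‖deriv B z‖ / (1 - ‖z‖)) := by
  set h : ℝ → ℝ := fun r => 2 * π * (∑ n ∈ Finset.range N, n * ‖coef B n‖ ^ 2 * r ^ (2 * n)) with hh
  have hmeas : Measurable fun z : ℂ => ENNReal.ofReal (‖deriv B z‖ / (1 - ‖z‖)) := by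
    have := measurable_deriv B
    fun_prop
  have hsymm : Measurable fun p : ℝ × ℝ => Complex.polarCoord.symm p := by
    simp only [Complex.polarCoord_symm_apply]
    fun_prop
  have hsymm' : ∀ p : ℝ × ℝ, Complex.polarCoord.symm p = (p.1 : ℂ) * Complex.exp (p.2 * Complex.I) := by
    intro p
    rw [Complex.polarCoord_symm_apply, Complex.exp_mul_I, Complex.ofReal_cos, Complex.ofReal_sin]
  rw [← lintegral_indicator Metric.isOpen_ball.measurableSet, ← Complex.lintegral_comp_polarCoord_symm]
  have hsub : Ioo r0 (1 - σ) ×ˢ Ioo (-π) π ⊆ polarCoord.target := by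
    rintro ⟨r, θ⟩ ⟨h1, h2⟩
    refine ⟨?_, h2⟩
    exact h0.trans h1.1
  refine le_trans ?_ (lintegral_mono_set hsub)
  have hpi : -π ≤ π := by linarith [Real.pi_pos]
  have hlow : ∀ r ∈ Ioo r0 (1 - σ), ENNReal.ofReal (h r0 * (1 - r)⁻¹) ≤
      ∫⁻ θ in Ioo (-π) π, ENNReal.ofReal r * ENNReal.ofReal
        (‖deriv B ((r : ℂ) * Complex.exp (θ * Complex.I))‖ / (1 - r)) := by
    intro r hr
    have hr0 : 0 < r := h0.trans hr.1
    have hr1 : r < 1 := by linarith [hr.2]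
    have hr2 : 0 < 1 - r := by linarith
    have hcont : Continuous fun θ : ℝ =>
        r * ‖deriv B ((r : ℂ) * Complex.exp (θ * Complex.I))‖ * (1 - r)⁻¹ :=
      (continuous_const.mul (cont_circle (hd.deriv Metric.isOpen_ball) hr0.le hr1).norm).mul
        continuous_const
    have e1 : ∫⁻ θ in Ioo (-π) π, ENNReal.ofReal r * ENNReal.ofReal
        (‖deriv B ((r : ℂ) * Complex.exp (θ * Complex.I))‖ / (1 - r)) =
        ENNReal.ofReal (∫ θ in (-π)..π,
          r * ‖deriv B ((r : ℂ) * Complex.exp (θ * Complex.I))‖ * (1 - r)⁻¹) := by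
      rw [intervalIntegral.integral_of_le hpi, integral_Ioc_eq_integral_Ioo,
        ofReal_integral_eq_lintegral_ofReal]
      · congr 1
        ext θ
        rw [← ENNReal.ofReal_mul hr0.le]
        congr 1
        ring
      · exact ((hcont.intervalIntegrable (-π) π).1).mono_set Ioo_subset_Ioc_self
      · filter_upwards with θ
        simp only [Pi.zero_apply]
        positivity
    have hper : Function.Periodic (fun θ : ℝ =>
        r * ‖deriv B ((r : ℂ) * Complex.exp (θ * Complex.I))‖) (2 * π) := by
      intro θ
      have : Complex.exp (((θ + 2 * π : ℝ) : ℂ) * Complex.I) = Complex.exp (θ * Complex.I) := by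
        push_cast
        rw [add_mul, Complex.exp_add, Complex.exp_two_pi_mul_I, mul_one]
      simp only [this]
    rw [e1, intervalIntegral.integral_mul_const]
    apply ENNReal.ofReal_le_ofReal
    apply mul_le_mul_of_nonneg_right _ (by positivity)
    have e2 := hper.intervalIntegral_add_eq (-π) 0
    rw [show -π + 2 * π = π by ring, zero_add] at e2
    rw [e2]
    refine le_trans ?_ (mean_deriv_lower hd hb hr0.le hr1 N)
    simp only [hh]
    gcongr
    exact hr.1.le
  calc ENNReal.ofReal (h r0 * Real.log ((1 - r0) / σ))
      = ∫⁻ r in Ioo r0 (1 - σ), ENNReal.ofReal (h r0 * (1 - r)⁻¹) := by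
        have e3 : ∫ r in r0..(1 - σ), h r0 * (1 - r)⁻¹ = h r0 * Real.log ((1 - r0) / σ) := by
          rw [intervalIntegral.integral_const_mul,
            intervalIntegral.integral_comp_sub_left (fun x => x⁻¹) 1,
            integral_inv_of_pos (by linarith) (by linarith)]
          congr 3; ring
        have hint : IntervalIntegrable (fun r : ℝ => h r0 * (1 - r)⁻¹) volume r0 (1 - σ) := by
          apply ContinuousOn.intervalIntegrable
          apply ContinuousOn.mul continuousOn_const
          apply ContinuousOn.inv₀ (by fun_prop)
          intro t ht
          rw [uIcc_of_le hσ1.le] at ht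
          linarith [ht.2]
        rw [← e3, intervalIntegral.integral_of_le hσ1.le, integral_Ioc_eq_integral_Ioo,
          ofReal_integral_eq_lintegral_ofReal]
        · exact hint.1.mono_set Ioo_subset_Ioc_self
        · filter_upwards [ae_restrict_mem measurableSet_Ioo] with r hr
          have : 0 < 1 - r := by linarith [hr.2]
          simp only [Pi.zero_apply, hh]
          positivity
    _ ≤ ∫⁻ r in Ioo r0 (1 - σ), ∫⁻ θ in Ioo (-π) π, ENNReal.ofReal r * ENNReal.ofReal
        (‖deriv B ((r : ℂ) * Complex.exp (θ * Complex.I))‖ / (1 - r)) :=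
        setLIntegral_mono' measurableSet_Ioo hlow
    _ = ∫⁻ p in Ioo r0 (1 - σ) ×ˢ Ioo (-π) π, ENNReal.ofReal p.1 * ENNReal.ofReal
        (‖deriv B ((p.1 : ℂ) * Complex.exp (p.2 * Complex.I))‖ / (1 - p.1)) := by
        rw [Measure.volume_eq_prod, ← Measure.prod_restrict, lintegral_prod]
        apply Measurable.aemeasurable
        have h1 : Measurable fun p : ℝ × ℝ => deriv B ((p.1 : ℂ) * Complex.exp (p.2 * Complex.I)) :=
          (measurable_deriv B).comp (by fun_prop)
        fun_prop
    _ ≤ _ := by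
        apply setLIntegral_mono' (measurableSet_Ioo.prod measurableSet_Ioo)
        rintro ⟨r, θ⟩ ⟨hr, hθ⟩
        have hr0 : 0 < r := h0.trans hr.1
        rw [smul_eq_mul, hsymm', indicator_of_mem]
        · simp only [norm_rexp hr0.le]
          exact le_rfl
        · rw [mem_ball_zero_iff, norm_rexp hr0.le]
          exact hr.2

lemma dirichlet_bound {B : ℂ → ℂ} (hd : DifferentiableOn ℂ B (Metric.ball 0 1))
    (hb : ∀ z ∈ Metric.ball (0:ℂ) 1, ‖B z‖ ≤ 1) {C : ℝ} (hC : 0 < C)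
    (hw : ∀ lam > (0:ℝ), volume {z ∈ Metric.ball (0:ℂ) 1 | lam * (1 - ‖z‖) < ‖deriv B z‖}
        ≤ ENNReal.ofReal (C / lam)) :
    Summable fun n : ℕ => n * ‖coef B n‖ ^ 2 := by
  have key : ∀ r0 : ℝ, 0 < r0 → r0 < 1 → ∀ N : ℕ,
      2 * π * (∑ n ∈ Finset.range N, n * ‖coef B n‖ ^ 2 * r0 ^ (2 * n)) ≤ 2 * C := by
    intro r0 h0 h1 N
    set H := 2 * π * (∑ n ∈ Finset.range N, n * ‖coef B n‖ ^ 2 * r0 ^ (2 * n)) with hH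
    by_contra hc
    push Not at hc
    have hineq : ∀ σ : ℝ, 0 < σ → σ < 1 - r0 →
        H * Real.log ((1 - r0) / σ) ≤ π + C * Real.log (2 / σ ^ 2) := by
      intro σ hs0 hs1
      have := (area_lower hd hb h0 hs0 (by linarith) N).trans
        (area_upper hd hb hC hw hs0 (by linarith))
      refine (ENNReal.ofReal_le_ofReal_iff ?_).1 this
      have : 0 ≤ Real.log (2 / σ ^ 2) := by
        apply Real.log_nonneg
        rw [le_div_iff₀ (by positivity)]
        nlinarith
      have := mul_nonneg hC.le this
      linarith [Real.pi_pos]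
    have hl : ∀ᶠ x : ℝ in atTop, (H - 2 * C) * x ≤ π + C * Real.log 2 - H * Real.log (1 - r0) := by
      filter_upwards [eventually_gt_atTop (-Real.log (1 - r0))] with x hx
      have hlt : Real.exp (-x) < 1 - r0 := by
        rw [← Real.lt_log_iff_exp_lt (by linarith)]; linarith
      have := hineq (Real.exp (-x)) (Real.exp_pos _) hlt
      rw [Real.log_div (by linarith) (Real.exp_pos _).ne', Real.log_div (by norm_num) (by positivity),
        Real.log_pow, Real.log_exp] at this
      push_cast at this
      linarith
    have ht : Tendsto (fun x : ℝ => (H - 2 * C) * x) atTop atTop :=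
      tendsto_id.const_mul_atTop (by linarith)
    obtain ⟨x, hx1, hx2⟩ := (hl.and (ht.eventually_gt_atTop
      (π + C * Real.log 2 - H * Real.log (1 - r0)))).exists
    linarith
  refine summable_of_sum_range_le (c := C / π) (fun n => by positivity) (fun N => ?_)
  have hlim : Tendsto (fun r : ℝ => 2 * π * (∑ n ∈ Finset.range N, n * ‖coef B n‖ ^ 2 * r ^ (2 * n)))
      (nhdsWithin 1 (Iio 1)) (nhds (2 * π * (∑ n ∈ Finset.range N, n * ‖coef B n‖ ^ 2 * 1 ^ (2 * n)))) := by
    apply tendsto_nhdsWithin_of_tendsto_nhds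
    apply Continuous.tendsto (f := fun r : ℝ => 2 * π * (∑ n ∈ Finset.range N, n * ‖coef B n‖ ^ 2 * r ^ (2 * n)))
    fun_prop
  have := le_of_tendsto hlim (by
    filter_upwards [Ioo_mem_nhdsLT (show (0:ℝ) < 1 by norm_num)] with r hr
    exact key r hr.1 hr.2 N)
  simp only [one_pow, mul_one] at this
  rw [le_div_iff₀ Real.pi_pos]
  linarith

/-- The filter of points of the disc tending to the unit circle. -/
def bdry : Filter ℂ := comap (fun z : ℂ => ‖z‖) (nhdsWithin 1 (Iio 1))

lemma eventually_bdry_iff {p : ℂ → Prop} :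
    (∀ᶠ z in bdry, p z) ↔ ∃ ρ < (1:ℝ), ∀ z : ℂ, ρ < ‖z‖ → ‖z‖ < 1 → p z := by
  unfold bdry
  rw [eventually_comap, eventually_nhdsWithin_iff, Metric.eventually_nhds_iff]
  constructor
  · rintro ⟨e, he, h⟩
    refine ⟨1 - e, by linarith, fun z h1 h2 => h (y := ‖z‖) ?_ h2 z rfl⟩
    rw [Real.dist_eq, abs_lt]; constructor <;> linarith
  · rintro ⟨ρ, hρ, h⟩
    refine ⟨1 - ρ, by linarith, fun y hy hy1 z hz => ?_⟩
    subst hz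
    rw [Real.dist_eq, abs_lt] at hy
    exact h z (by linarith [hy.1]) hy1

lemma bdry_norm_tendsto : Tendsto (fun z : ℂ => ‖z‖) bdry (nhds 1) :=
  tendsto_comap.mono_right nhdsWithin_le_nhds

lemma norm_le_one_of_bdry {g : ℂ → ℂ} (hg : DifferentiableOn ℂ g (Metric.ball 0 1))
    (ht : Tendsto (fun z => ‖g z‖) bdry (nhds 1)) {z : ℂ} (hz : z ∈ Metric.ball (0:ℂ) 1) :
    ‖g z‖ ≤ 1 := by
  apply le_of_forall_pos_le_add
  intro e he
  obtain ⟨ρ, hρ, h⟩ := eventually_bdry_iff.1 (ht.eventually_le_const (show (1:ℝ) < 1 + e by linarith))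
  have hz' : ‖z‖ < 1 := by simpa using hz
  obtain ⟨R, hR1, hR2⟩ := exists_between (max_lt hρ hz')
  have hR0 : 0 < R := lt_of_le_of_lt (norm_nonneg z) ((le_max_right _ _).trans_lt hR1)
  have hsub : Metric.closedBall (0:ℂ) R ⊆ Metric.ball 0 1 := Metric.closedBall_subset_ball hR2
  refine Complex.norm_le_of_forall_mem_frontier_norm_le (U := Metric.ball 0 R)
    Metric.isBounded_ball ?_ ?_ ?_
  · apply DifferentiableOn.diffContOnCl
    rw [closure_ball _ hR0.ne']
    exact hg.mono hsub
  · intro w hw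
    rw [frontier_ball _ hR0.ne'] at hw
    have : ‖w‖ = R := by simpa using hw
    exact h w (by rw [this]; exact (le_max_left _ _).trans_lt hR1) (by rw [this]; exact hR2)
  · apply subset_closure
    simpa using (le_max_right _ _).trans_lt hR1

lemma mob_identity (a z : ℂ) :
    ‖1 - (starRingEnd ℂ) a * z‖ ^ 2 - ‖a - z‖ ^ 2 = (1 - ‖a‖ ^ 2) * (1 - ‖z‖ ^ 2) := by
  simp only [← Complex.normSq_eq_norm_sq, Complex.normSq_apply]
  simp
  ring

lemma mob_den_pos {a z : ℂ} (ha : ‖a‖ < 1) (hz : ‖z‖ ≤ 1) :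
    0 < ‖1 - (starRingEnd ℂ) a * z‖ := by
  have h1 : ‖(starRingEnd ℂ) a * z‖ < 1 := by
    rw [norm_mul, RCLike.norm_conj]
    nlinarith [norm_nonneg a, norm_nonneg z]
  have := norm_sub_norm_le (1:ℂ) ((starRingEnd ℂ) a * z)
  rw [norm_one] at this
  linarith

lemma mob_den_ne {a z : ℂ} (ha : ‖a‖ < 1) (hz : ‖z‖ ≤ 1) :
    1 - (starRingEnd ℂ) a * z ≠ 0 := norm_pos_iff.1 (mob_den_pos ha hz)

lemma mob_norm_sq {a z : ℂ} (ha : ‖a‖ < 1) (hz : ‖z‖ ≤ 1) :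
    ‖(a - z) / (1 - (starRingEnd ℂ) a * z)‖ ^ 2 =
      1 - (1 - ‖a‖ ^ 2) * (1 - ‖z‖ ^ 2) / ‖1 - (starRingEnd ℂ) a * z‖ ^ 2 := by
  have h := mob_identity a z
  have hp := mob_den_pos ha hz
  rw [norm_div, div_pow, ← h, sub_div, div_self (pow_pos hp 2).ne']
  ring

lemma mob_tendsto {a : ℂ} (ha : ‖a‖ < 1) :
    Tendsto (fun z => ‖(a - z) / (1 - (starRingEnd ℂ) a * z)‖) bdry (nhds 1) := by
  have hin : ∀ᶠ z in bdry, ‖z‖ < 1 := eventually_bdry_iff.2 ⟨0, by norm_num, fun z _ h => h⟩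
  have key : Tendsto (fun z => ‖(a - z) / (1 - (starRingEnd ℂ) a * z)‖ ^ 2) bdry (nhds 1) := by
    have h1 : Tendsto (fun z : ℂ => 1 - (1 - ‖z‖ ^ 2) / (1 - ‖a‖) ^ 2) bdry (nhds 1) := by
      have := ((bdry_norm_tendsto.pow 2).const_sub 1).div_const ((1 - ‖a‖) ^ 2) |>.const_sub 1
      simpa using this
    refine tendsto_of_tendsto_of_tendsto_of_le_of_le' h1 tendsto_const_nhds ?_ ?_
    · filter_upwards [hin] with z hz
      rw [mob_norm_sq ha hz.le]
      have h2 : 1 - ‖a‖ ≤ ‖1 - (starRingEnd ℂ) a * z‖ := by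
        have := norm_sub_norm_le (1:ℂ) ((starRingEnd ℂ) a * z)
        rw [norm_one, norm_mul, RCLike.norm_conj] at this
        nlinarith [norm_nonneg a, norm_nonneg z]
      have h3 : 0 < 1 - ‖a‖ := by linarith
      have h4 : 0 ≤ 1 - ‖z‖ ^ 2 := by nlinarith [norm_nonneg z]
      gcongr
      nlinarith [norm_nonneg a]
    · filter_upwards [hin] with z hz
      rw [mob_norm_sq ha hz.le]
      have h4 : 0 ≤ 1 - ‖z‖ ^ 2 := by nlinarith [norm_nonneg z]
      have h5 : 0 ≤ 1 - ‖a‖ ^ 2 := by nlinarith [norm_nonneg a]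
      have := div_nonneg (mul_nonneg h5 h4) (sq_nonneg ‖1 - (starRingEnd ℂ) a * z‖)
      linarith
  have := key.sqrt
  simp only [Real.sqrt_sq (norm_nonneg _), Real.sqrt_one] at this
  exact this

lemma const_of_bdry {g : ℂ → ℂ} (hg : DifferentiableOn ℂ g (Metric.ball 0 1))
    (ht : Tendsto (fun z => ‖g z‖) bdry (nhds 1)) (h0 : ∀ z ∈ Metric.ball (0:ℂ) 1, g z ≠ 0) :
    IsFiniteBlaschkeProduct g := by
  have h1 : ∀ z ∈ Metric.ball (0:ℂ) 1, ‖g z‖ = 1 := by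
    intro z hz
    refine le_antisymm (norm_le_one_of_bdry hg ht hz) ?_
    have := norm_le_one_of_bdry (g := fun z => (g z)⁻¹) (hg.inv h0)
      (by simpa using ht.inv₀ one_ne_zero) hz
    rw [norm_inv] at this
    exact (inv_le_one₀ (norm_pos_iff.2 (h0 z hz))).1 this
  have hm : (0:ℂ) ∈ Metric.ball (0:ℂ) 1 := by simp
  have := Complex.eqOn_of_isPreconnected_of_isMaxOn_norm
    (convex_ball (0:ℂ) 1).isPreconnected Metric.isOpen_ball hg hm
    (fun z hz => by simp [h1 z hz, h1 0 hm])
  refine ⟨g 0, 0, Fin.elim0, h1 0 hm, fun i => i.elim0, fun z hz => ?_⟩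
  simpa using this hz

lemma blaschke_induction {ρ κ : ℝ} (hρ : ρ < 1) {z0 : ℂ} (hz0 : ‖z0‖ < 1) (hκ : 0 < κ)
    (hk : ∀ a : ℂ, ‖a‖ ≤ ρ → ‖(a - z0) / (1 - (starRingEnd ℂ) a * z0)‖ ≤ κ) (n : ℕ) :
    ∀ g : ℂ → ℂ, DifferentiableOn ℂ g (Metric.ball 0 1) →
    Tendsto (fun z => ‖g z‖) bdry (nhds 1) →
    (∀ z ∈ Metric.ball (0:ℂ) 1, g z = 0 → ‖z‖ ≤ ρ) → κ ^ n < ‖g z0‖ →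
    IsFiniteBlaschkeProduct g := by
  induction n with
  | zero =>
    intro g hg ht _ h
    exfalso
    have := norm_le_one_of_bdry hg ht (z := z0) (by simpa using hz0)
    simp at h
    linarith
  | succ n ih =>
    intro g hg ht hz h
    by_cases h0 : ∀ z ∈ Metric.ball (0:ℂ) 1, g z ≠ 0
    · exact const_of_bdry hg ht h0
    push Not at h0
    obtain ⟨a, ha, hga⟩ := h0
    have haρ := hz a ha hga
    have ha1 : ‖a‖ < 1 := by linarith
    set q : ℂ → ℂ := fun z => -(1 - (starRingEnd ℂ) a * z) * dslope g a z with hq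
    have hfac : ∀ z ∈ Metric.ball (0:ℂ) 1, g z = (a - z) / (1 - (starRingEnd ℂ) a * z) * q z := by
      intro z hz
      have hd := mob_den_ne ha1 (z := z) (by have : ‖z‖ < 1 := by simpa using hz
                                             exact this.le)
      have h1 := sub_smul_dslope g a z
      rw [hga, sub_zero, smul_eq_mul] at h1
      have h2 : q z = -(1 - (starRingEnd ℂ) a * z) * dslope g a z := rfl
      rw [h2, ← h1, div_mul_eq_mul_div, eq_div_iff hd]
      ring
    have hqd : DifferentiableOn ℂ q (Metric.ball 0 1) := by
      have h1 := (Complex.differentiableOn_dslope (Metric.isOpen_ball.mem_nhds ha)).2 hg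
      exact DifferentiableOn.mul (by fun_prop) h1
    have hin : ∀ᶠ z in bdry, z ∈ Metric.ball (0:ℂ) 1 :=
      eventually_bdry_iff.2 ⟨0, by norm_num, fun z _ h => by simpa using h⟩
    have hne : ∀ᶠ z in bdry, ‖(a - z) / (1 - (starRingEnd ℂ) a * z)‖ ≠ 0 :=
      (mob_tendsto ha1).eventually_ne one_ne_zero
    have hqt : Tendsto (fun z => ‖q z‖) bdry (nhds 1) := by
      have h1 := ht.div (mob_tendsto ha1) one_ne_zero
      rw [div_one] at h1
      refine h1.congr' ?_
      filter_upwards [hin, hne] with z hz hz2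
      simp only [Pi.div_apply]
      rw [hfac z hz, norm_mul, mul_div_cancel_left₀ _ hz2]
    have hqB := ih q hqd hqt (fun z hzb hz0 => hz z hzb (by rw [hfac z hzb, hz0, mul_zero])) ?_
    · obtain ⟨ξ, m, b, hξ, hb, hB⟩ := hqB
      refine ⟨ξ, m + 1, Fin.cons a b, hξ, ?_, ?_⟩
      · intro i
        refine Fin.cases ?_ ?_ i
        · simpa using ha1
        · intro j; simpa using hb j
      · intro z hz
        rw [hfac z hz, hB z hz, Fin.prod_univ_succ]
        simp only [Fin.cons_zero, Fin.cons_succ]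
        ring
    · rw [hfac z0 (by simpa using hz0), norm_mul] at h
      have h1 : κ ^ n * κ < κ * ‖q z0‖ := by
        rw [← pow_succ]
        exact h.trans_le (mul_le_mul_of_nonneg_right (hk a haρ) (norm_nonneg _))
      nlinarith

lemma blaschke_of_bdry {g : ℂ → ℂ} (hg : DifferentiableOn ℂ g (Metric.ball 0 1))
    (ht : Tendsto (fun z => ‖g z‖) bdry (nhds 1)) : IsFiniteBlaschkeProduct g := by
  obtain ⟨ρ', hρ', h⟩ := eventually_bdry_iff.1 (ht.eventually_ne one_ne_zero)
  set ρ := max ρ' 0 with hρd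
  have hρ0 : 0 ≤ ρ := le_max_right _ _
  have hρ : ρ < 1 := max_lt hρ' one_pos
  obtain ⟨R, hR1, hR2⟩ := exists_between hρ
  set z0 : ℂ := (R : ℂ)
  have hz0n : ‖z0‖ = R := by simp [z0, abs_of_pos (hρ0.trans_lt hR1)]
  have hgz0 : 0 < ‖g z0‖ := lt_of_le_of_ne (norm_nonneg _)
    (h z0 (by rw [hz0n]; exact (le_max_left _ _).trans_lt hR1) (by rw [hz0n]; exact hR2)).symm
  set s : ℝ := (1 - ρ ^ 2) * (1 - R ^ 2) / 4 with hs
  have hs0 : 0 < s := by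
    have h1 : 0 < 1 - ρ ^ 2 := by nlinarith
    have h2 : 0 < 1 - R ^ 2 := by nlinarith
    positivity
  have hs1 : s < 1 := by
    have : (1 - ρ ^ 2) * (1 - R ^ 2) ≤ 1 * 1 := by
      apply mul_le_mul <;> nlinarith
    rw [hs]; linarith
  set κ := Real.sqrt (1 - s) with hκd
  have hκ : 0 < κ := Real.sqrt_pos.2 (by linarith)
  have hκ1 : κ < 1 := by rw [hκd, Real.sqrt_lt' one_pos]; linarith
  obtain ⟨n, hn⟩ := exists_pow_lt_of_lt_one hgz0 hκ1
  refine blaschke_induction (ρ := ρ) (κ := κ) (z0 := z0) hρ (by rw [hz0n]; exact hR2) hκ ?_ n g hg ht ?_ hn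
  · intro a ha
    have ha1 : ‖a‖ < 1 := by linarith
    have hz1 : ‖z0‖ ≤ 1 := by linarith
    apply Real.le_sqrt_of_sq_le
    rw [mob_norm_sq ha1 hz1, hz0n]
    have hp := mob_den_pos ha1 hz1
    have h2 : ‖1 - (starRingEnd ℂ) a * z0‖ ≤ 2 := by
      refine (norm_sub_le _ _).trans ?_
      rw [norm_one, norm_mul, RCLike.norm_conj]
      nlinarith [norm_nonneg a, norm_nonneg z0]
    have h3 : s ≤ (1 - ‖a‖ ^ 2) * (1 - R ^ 2) / ‖1 - (starRingEnd ℂ) a * z0‖ ^ 2 := by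
      have e1 : 0 ≤ 1 - R ^ 2 := by nlinarith
      have e2 : 0 ≤ 1 - ‖a‖ ^ 2 := by nlinarith [norm_nonneg a]
      rw [hs]
      gcongr
      nlinarith [norm_nonneg (1 - (starRingEnd ℂ) a * z0)]
    linarith
  · intro z hz hz2
    by_contra hc
    push Not at hc
    exact h z ((le_max_left _ _).trans_lt hc) (by simpa using hz) (by rw [hz2, norm_zero])

lemma blaschke_deriv_bound {B : ℂ → ℂ} (hB : IsFiniteBlaschkeProduct B) :
    ∃ M > (0:ℝ), ∀ z ∈ Metric.ball (0:ℂ) 1, ‖deriv B z‖ ≤ M := by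
  obtain ⟨ξ, n, a, hξ, ha, h⟩ := hB
  set Q : ℂ → ℂ := fun z => ξ * ∏ i, (a i - z) / (1 - (starRingEnd ℂ) (a i) * z) with hQ
  set U : Set ℂ := ⋂ i, {z : ℂ | 1 - (starRingEnd ℂ) (a i) * z ≠ 0} with hU
  have hUo : IsOpen U := by
    apply isOpen_iInter_of_finite
    intro i
    exact isOpen_ne_fun (by fun_prop) (by fun_prop)
  have hsub : Metric.closedBall (0:ℂ) 1 ⊆ U := by
    intro z hz
    rw [hU, mem_iInter]
    intro i
    exact mob_den_ne (ha i) (by simpa using hz)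
  have hQd : DifferentiableOn ℂ Q U := by
    apply DifferentiableOn.const_mul
    apply DifferentiableOn.fun_finsetProd
    intro i _
    apply DifferentiableOn.div (by fun_prop) (by fun_prop)
    intro z hz
    exact mem_iInter.1 hz i
  have hc : ContinuousOn (deriv Q) (Metric.closedBall 0 1) :=
    ((hQd.deriv hUo).continuousOn).mono hsub
  obtain ⟨M, hM⟩ := (isCompact_closedBall (0:ℂ) 1).exists_bound_of_continuousOn hc
  refine ⟨max M 1, lt_max_of_lt_right one_pos, fun z hz => ?_⟩
  have : B =ᶠ[nhds z] Q := by
    filter_upwards [Metric.isOpen_ball.mem_nhds hz] with w hw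
    exact h w hw
  rw [this.deriv_eq]
  exact (hM z (Metric.ball_subset_closedBall hz)).trans (le_max_left _ _)

lemma weak_of_blaschke {B : ℂ → ℂ} (hB : IsFiniteBlaschkeProduct B) :
    ∃ C > (0:ℝ), ∀ lam > (0:ℝ),
      volume {z ∈ Metric.ball (0:ℂ) 1 | lam * (1 - ‖z‖) < ‖deriv B z‖}
        ≤ ENNReal.ofReal (C / lam) := by
  obtain ⟨M, hM, h⟩ := blaschke_deriv_bound hB
  refine ⟨2 * π * M, by positivity, fun lam hl => ?_⟩
  set t := 1 - M / lam with ht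
  have hpi : ∀ r : ℝ, 0 ≤ r → volume (Metric.ball (0:ℂ) r) = ENNReal.ofReal (r ^ 2 * π) := by
    intro r hr
    rw [Complex.volume_ball, ENNReal.ofReal_mul (by positivity), ENNReal.ofReal_pow hr,
      ← NNReal.coe_real_pi, ENNReal.ofReal_coe_nnreal]
  have hMl : 0 < M / lam := by positivity
  have hC : 2 * π * M / lam = 2 * π * (M / lam) := by ring
  rw [hC]
  rcases le_or_gt t 0 with h0 | h0
  · refine (measure_mono (sep_subset _ _)).trans ?_
    rw [hpi 1 zero_le_one]
    apply ENNReal.ofReal_le_ofReal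
    nlinarith [Real.pi_pos]
  · have hsub : {z ∈ Metric.ball (0:ℂ) 1 | lam * (1 - ‖z‖) < ‖deriv B z‖} ⊆
        Metric.ball 0 1 \ Metric.ball 0 t := by
      rintro z ⟨hz, hz2⟩
      refine ⟨hz, fun hz3 => ?_⟩
      have h1 := h z hz
      have h2 : ‖z‖ < t := by simpa using hz3
      have h3 : lam * (1 - ‖z‖) < M := by linarith
      have h4 : 1 - ‖z‖ < M / lam := by rw [lt_div_iff₀ hl]; linarith
      linarith
    refine (measure_mono hsub).trans ?_
    rw [measure_sdiff (Metric.ball_subset_ball (by linarith))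
      Metric.isOpen_ball.measurableSet.nullMeasurableSet measure_ball_lt_top.ne,
      hpi 1 zero_le_one, hpi t h0.le, ← ENNReal.ofReal_sub _ (by positivity)]
    apply ENNReal.ofReal_le_ofReal
    have : M / lam = 1 - t := by rw [ht]; ring
    rw [this]
    nlinarith [Real.pi_pos, mul_nonneg Real.pi_pos.le (sq_nonneg (1 - t))]

/-- Point of the unit circle. -/
def cpt (θ : ℝ) : ℂ := Complex.exp (θ * Complex.I)

lemma cpt_norm (θ : ℝ) : ‖cpt θ‖ = 1 := Complex.norm_exp_ofReal_mul_I θ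

lemma cpt_cont : Continuous cpt := by unfold cpt; fun_prop

/-- Poisson kernel on the unit circle. -/
def pk (a : ℂ) (θ : ℝ) : ℝ := (1 - ‖a‖ ^ 2) / ‖cpt θ - a‖ ^ 2

lemma cpt_sub_pos {a : ℂ} (ha : ‖a‖ < 1) (θ : ℝ) : 0 < ‖cpt θ - a‖ := by
  have := norm_sub_norm_le (cpt θ) a
  rw [cpt_norm] at this
  linarith

lemma pk_nonneg {a : ℂ} (ha : ‖a‖ < 1) (θ : ℝ) : 0 ≤ pk a θ := by
  have : 0 ≤ 1 - ‖a‖ ^ 2 := by nlinarith [norm_nonneg a]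
  exact div_nonneg this (sq_nonneg _)

lemma pk_cont {a : ℂ} (ha : ‖a‖ < 1) : Continuous (pk a) := by
  unfold pk
  have := cpt_cont
  apply Continuous.div (by fun_prop) (by fun_prop)
  intro θ
  exact (pow_pos (cpt_sub_pos ha θ) 2).ne'

lemma pk_integral {G : ℂ → ℂ} (hG : DiffContOnCl ℂ G (Metric.ball 0 1)) {a : ℂ} (ha : ‖a‖ < 1) :
    ∫ θ in (0:ℝ)..2 * π, (pk a θ : ℂ) * G (cpt θ) = ((2 * π : ℝ) : ℂ) * G a := by
  have h := hG.circleAverage_poissonKernel_smul (w := a) (by simpa using ha)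
  rw [← h, Real.circleAverage, Complex.real_smul, ← mul_assoc, ← Complex.ofReal_mul,
    mul_inv_cancel₀ (by positivity), Complex.ofReal_one, one_mul]
  congr 1
  ext θ
  have h1 : circleMap 0 1 θ = cpt θ := by simp [circleMap, cpt]
  rw [Pi.smul_apply', h1, Complex.real_smul]
  congr 2
  simp [pk, poissonKernel_def, cpt_norm]

lemma pk_variance {G : ℂ → ℂ} (hG : DiffContOnCl ℂ G (Metric.ball 0 1)) {a : ℂ} (ha : ‖a‖ < 1) :
    ∫ θ in (0:ℝ)..2 * π, pk a θ * ‖G (cpt θ) - G a‖ ^ 2 =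
      (∫ θ in (0:ℝ)..2 * π, pk a θ * ‖G (cpt θ)‖ ^ 2) - 2 * π * ‖G a‖ ^ 2 := by
  have hGc : Continuous fun θ => G (cpt θ) := by
    apply hG.continuousOn.comp_continuous cpt_cont
    intro θ
    rw [closure_ball _ one_ne_zero]
    simp [cpt_norm]
  have hp := pk_cont ha
  have hpc : Continuous fun θ => (pk a θ : ℂ) := Complex.continuous_ofReal.comp hp
  have hw : Continuous fun θ => (starRingEnd ℂ) (G a) * ((pk a θ : ℂ) * G (cpt θ)) :=
    continuous_const.mul (hpc.mul hGc)
  have hn : Continuous fun θ => pk a θ * ‖G (cpt θ)‖ ^ 2 := hp.mul (hGc.norm.pow 2)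
  have hw2 : Continuous fun θ =>
      2 * ((starRingEnd ℂ) (G a) * ((pk a θ : ℂ) * G (cpt θ))).re :=
    continuous_const.mul (Complex.continuous_re.comp hw)
  have h1 : ∫ θ in (0:ℝ)..2 * π, pk a θ = 2 * π := by
    have := pk_integral (G := fun _ => 1) diffContOnCl_const ha
    simp only [mul_one] at this
    rw [intervalIntegral.integral_ofReal] at this
    exact_mod_cast this
  have hint : IntervalIntegrable (fun θ => (starRingEnd ℂ) (G a) * ((pk a θ : ℂ) * G (cpt θ)))
      volume 0 (2 * π) := by
    exact hw.intervalIntegrable _ _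
  have h2 : ∫ θ in (0:ℝ)..2 * π, ((starRingEnd ℂ) (G a) * ((pk a θ : ℂ) * G (cpt θ))).re =
      2 * π * ‖G a‖ ^ 2 := by
    have h3 := Complex.reCLM.intervalIntegral_comp_comm hint
    simp only [Complex.reCLM_apply] at h3
    rw [h3, intervalIntegral.integral_const_mul, pk_integral hG ha]
    have : (starRingEnd ℂ) (G a) * (((2 * π : ℝ) : ℂ) * G a) = ((2 * π * ‖G a‖ ^ 2 : ℝ) : ℂ) := by
      have := Complex.conj_mul' (G a)
      push_cast
      rw [← this]
      ring
    rw [this, Complex.ofReal_re]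
  have e : ∀ θ, pk a θ * ‖G (cpt θ) - G a‖ ^ 2 = pk a θ * ‖G (cpt θ)‖ ^ 2 -
      2 * ((starRingEnd ℂ) (G a) * ((pk a θ : ℂ) * G (cpt θ))).re + ‖G a‖ ^ 2 * pk a θ := by
    intro θ
    simp only [← Complex.normSq_eq_norm_sq, Complex.normSq_apply]
    simp
    ring
  simp_rw [e]
  rw [intervalIntegral.integral_add, intervalIntegral.integral_sub,
    intervalIntegral.integral_const_mul, intervalIntegral.integral_const_mul, h1, h2]
  · ring
  · exact hn.intervalIntegrable _ _
  · exact hw2.intervalIntegrable _ _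
  · exact (hn.sub hw2).intervalIntegrable _ _
  · exact (continuous_const.mul hp).intervalIntegrable _ _

lemma parseval_fin (q : ℕ → ℂ) (M : ℕ) :
    ∫ θ in (0:ℝ)..2 * π, ‖∑ j ∈ Finset.range M, q j * cpt θ ^ j‖ ^ 2 =
      2 * π * ∑ j ∈ Finset.range M, ‖q j‖ ^ 2 := by
  set c : ℕ → ℂ := fun j => if j < M then q j else 0 with hc
  have hz : ∀ j ∉ Finset.range M, c j = 0 := by
    intro j hj
    simp only [Finset.mem_range] at hj
    simp [hc, hj]
  have hcs : Summable fun n => ‖c n‖ := by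
    apply summable_of_ne_finset_zero (s := Finset.range M)
    intro j hj
    rw [hz j hj, norm_zero]
  have hs : ∀ θ : ℝ, HasSum (fun n => c n * Complex.exp (θ * Complex.I) ^ n)
      (∑ j ∈ Finset.range M, q j * cpt θ ^ j) := by
    intro θ
    have h1 : HasSum (fun n => c n * Complex.exp (θ * Complex.I) ^ n)
        (∑ j ∈ Finset.range M, c j * Complex.exp (θ * Complex.I) ^ j) :=
      hasSum_sum_of_ne_finset_zero (fun j hj => by rw [hz j hj, zero_mul])
    convert h1 using 1
    apply Finset.sum_congr rfl
    intro j hj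
    simp [hc, Finset.mem_range.1 hj, cpt]
  have hcont : Continuous fun θ => ∑ j ∈ Finset.range M, q j * cpt θ ^ j := by
    have := cpt_cont
    fun_prop
  have P := parseval hcs hcs hs hs hcont
  have P2 : HasSum (fun n => ((2 * π : ℝ) : ℂ) * (c n * (starRingEnd ℂ) (c n)))
      (∑ j ∈ Finset.range M, ((2 * π : ℝ) : ℂ) * (c j * (starRingEnd ℂ) (c j))) :=
    hasSum_sum_of_ne_finset_zero (fun j hj => by rw [hz j hj, zero_mul, mul_zero])
  have h3 := P.unique P2
  simp only [Complex.mul_conj'] at h3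
  have h4 : ∀ x : ℂ, ((‖x‖ : ℂ)) ^ 2 = ((‖x‖ ^ 2 : ℝ) : ℂ) := by intro x; push_cast; rfl
  simp only [h4] at h3
  rw [intervalIntegral.integral_ofReal] at h3
  have h5 : ∫ θ in (0:ℝ)..2 * π, ‖∑ j ∈ Finset.range M, q j * cpt θ ^ j‖ ^ 2 =
      ∑ j ∈ Finset.range M, (2 * π) * ‖c j‖ ^ 2 := by
    exact_mod_cast h3
  rw [h5, Finset.mul_sum]
  apply Finset.sum_congr rfl
  intro j hj
  simp [hc, Finset.mem_range.1 hj]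

lemma poly_quot (g : ℕ → ℂ) (M : ℕ) (z a : ℂ) :
    ∑ n ∈ Finset.range M, g n * z ^ n - ∑ n ∈ Finset.range M, g n * a ^ n =
    (∑ i ∈ Finset.range M, (∑ n ∈ Finset.Ico (i + 1) M, g n * a ^ (n - 1 - i)) * z ^ i) * (z - a) := by
  rw [← Finset.sum_sub_distrib]
  have h1 : ∀ n, g n * z ^ n - g n * a ^ n =
      (∑ i ∈ Finset.range n, g n * a ^ (n - 1 - i) * z ^ i) * (z - a) := by
    intro n
    rw [← mul_sub, ← geom_sum₂_mul, ← mul_assoc, Finset.mul_sum]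
    congr 1
    apply Finset.sum_congr rfl
    intro i _
    ring
  simp_rw [h1]
  rw [← Finset.sum_mul]
  congr 1
  simp_rw [Finset.sum_mul]
  apply Finset.sum_comm'
  intro n i
  simp only [Finset.mem_range, Finset.mem_Ico]
  omega

lemma poly_dirichlet (g : ℕ → ℂ) (M : ℕ) {a : ℂ} (ha : ‖a‖ < 1) :
    ∫ θ in (0:ℝ)..2 * π, pk a θ *
      ‖∑ n ∈ Finset.range M, g n * cpt θ ^ n - ∑ n ∈ Finset.range M, g n * a ^ n‖ ^ 2 ≤
    2 * π * ∑ n ∈ Finset.range M, n * ‖g n‖ ^ 2 := by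
  have hx1 : 0 < 1 - ‖a‖ ^ 2 := by nlinarith [norm_nonneg a]
  set q : ℕ → ℂ := fun i => ∑ n ∈ Finset.Ico (i + 1) M, g n * a ^ (n - 1 - i) with hq
  have e : ∀ θ, pk a θ *
      ‖∑ n ∈ Finset.range M, g n * cpt θ ^ n - ∑ n ∈ Finset.range M, g n * a ^ n‖ ^ 2 =
      (1 - ‖a‖ ^ 2) * ‖∑ i ∈ Finset.range M, q i * cpt θ ^ i‖ ^ 2 := by
    intro θ
    have := cpt_sub_pos ha θ
    rw [poly_quot, norm_mul, pk]
    field_simp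
    rfl
  simp_rw [e]
  rw [intervalIntegral.integral_const_mul, parseval_fin]
  have hqb : ∀ i, (1 - ‖a‖ ^ 2) * ‖q i‖ ^ 2 ≤ ∑ n ∈ Finset.Ico (i + 1) M, ‖g n‖ ^ 2 := by
    intro i
    have h1 : ‖q i‖ ≤ ∑ n ∈ Finset.Ico (i + 1) M, ‖g n‖ * ‖a‖ ^ (n - 1 - i) := by
      refine (norm_sum_le _ _).trans (le_of_eq ?_)
      simp
    have h2 : ‖q i‖ ^ 2 ≤ (∑ n ∈ Finset.Ico (i + 1) M, ‖g n‖ ^ 2) *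
        ∑ n ∈ Finset.Ico (i + 1) M, (‖a‖ ^ (n - 1 - i)) ^ 2 :=
      (pow_le_pow_left₀ (norm_nonneg _) h1 2).trans (Finset.sum_mul_sq_le_sq_mul_sq _ _ _)
    have h3 : ∑ n ∈ Finset.Ico (i + 1) M, (‖a‖ ^ (n - 1 - i)) ^ 2 ≤ (1 - ‖a‖ ^ 2)⁻¹ := by
      rw [Finset.sum_Ico_eq_sum_range]
      have h4 : ∀ k, (‖a‖ ^ (i + 1 + k - 1 - i)) ^ 2 = (‖a‖ ^ 2) ^ k := by
        intro k
        rw [show i + 1 + k - 1 - i = k by omega, ← pow_mul, ← pow_mul, mul_comm]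
      simp_rw [h4]
      exact sum_le_hasSum _ (fun k _ => by positivity)
        (hasSum_geometric_of_lt_one (by positivity) (by linarith))
    have h5 : 0 ≤ ∑ n ∈ Finset.Ico (i + 1) M, ‖g n‖ ^ 2 := Finset.sum_nonneg fun _ _ => by positivity
    calc (1 - ‖a‖ ^ 2) * ‖q i‖ ^ 2 ≤ (1 - ‖a‖ ^ 2) *
          ((∑ n ∈ Finset.Ico (i + 1) M, ‖g n‖ ^ 2) * (1 - ‖a‖ ^ 2)⁻¹) := by
          gcongr
          exact h2.trans (by gcongr)
      _ = _ := by field_simp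
  have h6 : ∑ i ∈ Finset.range M, ∑ n ∈ Finset.Ico (i + 1) M, ‖g n‖ ^ 2 =
      ∑ n ∈ Finset.range M, n * ‖g n‖ ^ 2 := by
    rw [Finset.sum_comm' (t' := Finset.range M) (s' := fun n => Finset.range n)]
    · simp
    · intro i n
      simp only [Finset.mem_range, Finset.mem_Ico]
      omega
  rw [← h6, mul_left_comm, Finset.mul_sum]
  gcongr with i _
  exact hqb i

lemma poly_combined (g : ℕ → ℂ) {N M : ℕ} (hNM : N ≤ M) {a : ℂ} (ha : ‖a‖ < 1) :
    ∫ θ in (0:ℝ)..2 * π, pk a θ *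
      ‖∑ n ∈ Finset.range M, g n * cpt θ ^ n - ∑ n ∈ Finset.range M, g n * a ^ n‖ ^ 2 ≤
    2 * π * (2 * (1 - ‖a‖ ^ 2) * (∑ n ∈ Finset.range N, n * ‖g n‖) ^ 2 +
      2 * ∑ n ∈ Finset.Ico N M, n * ‖g n‖ ^ 2) := by
  have hx1 : 0 < 1 - ‖a‖ ^ 2 := by nlinarith [norm_nonneg a]
  have hp := pk_cont ha
  have hcp := cpt_cont
  set K := ∑ n ∈ Finset.range N, n * ‖g n‖ with hK
  set g' : ℕ → ℂ := fun n => if N ≤ n then g n else 0 with hg'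
  have hsplit : ∀ z : ℂ, ∑ n ∈ Finset.range M, g n * z ^ n =
      ∑ n ∈ Finset.range N, g n * z ^ n + ∑ n ∈ Finset.range M, g' n * z ^ n := by
    intro z
    rw [← Finset.sum_range_add_sum_Ico _ hNM, ← Finset.sum_range_add_sum_Ico (fun n => g' n * z ^ n) hNM]
    rw [Finset.sum_eq_zero (s := Finset.range N) (f := fun n => g' n * z ^ n), zero_add]
    · congr 1
      apply Finset.sum_congr rfl
      intro n hn
      simp [hg', (Finset.mem_Ico.1 hn).1]
    · intro n hn
      simp [hg', Finset.mem_range.1 hn]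
  have hD : ∑ n ∈ Finset.range M, n * ‖g' n‖ ^ 2 = ∑ n ∈ Finset.Ico N M, n * ‖g n‖ ^ 2 := by
    rw [← Finset.sum_range_add_sum_Ico _ hNM, Finset.sum_eq_zero (s := Finset.range N), zero_add]
    · apply Finset.sum_congr rfl
      intro n hn
      simp [hg', (Finset.mem_Ico.1 hn).1]
    · intro n hn
      simp [hg', Finset.mem_range.1 hn]
  have hlow : ∀ θ, ‖∑ n ∈ Finset.range N, g n * cpt θ ^ n - ∑ n ∈ Finset.range N, g n * a ^ n‖ ≤
      K * ‖cpt θ - a‖ := by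
    intro θ
    rw [← Finset.sum_sub_distrib, hK, Finset.sum_mul]
    refine (norm_sum_le _ _).trans (Finset.sum_le_sum fun n _ => ?_)
    rw [← mul_sub, norm_mul, ← geom_sum₂_mul, norm_mul, ← mul_assoc, mul_comm (n:ℝ)]
    gcongr
    refine (norm_sum_le _ _).trans ?_
    refine (Finset.sum_le_card_nsmul _ _ 1 ?_).trans (by simp)
    intro i _
    rw [norm_mul, norm_pow, norm_pow, cpt_norm, one_pow, one_mul]
    exact pow_le_one₀ (norm_nonneg _) ha.le
  calc _ ≤ ∫ θ in (0:ℝ)..2 * π, (2 * (1 - ‖a‖ ^ 2) * K ^ 2 + 2 * (pk a θ *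
      ‖∑ n ∈ Finset.range M, g' n * cpt θ ^ n - ∑ n ∈ Finset.range M, g' n * a ^ n‖ ^ 2)) := by
        apply intervalIntegral.integral_mono_on (by positivity)
        · apply Continuous.intervalIntegrable; fun_prop
        · apply Continuous.intervalIntegrable; fun_prop
        intro θ _
        rw [hsplit, hsplit]
        set u := ∑ n ∈ Finset.range N, g n * cpt θ ^ n
        set v := ∑ n ∈ Finset.range N, g n * a ^ n
        set u' := ∑ n ∈ Finset.range M, g' n * cpt θ ^ n
        set v' := ∑ n ∈ Finset.range M, g' n * a ^ n
        have h1 : ‖u + u' - (v + v')‖ ≤ ‖u - v‖ + ‖u' - v'‖ := by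
          rw [show u + u' - (v + v') = (u - v) + (u' - v') by ring]
          exact norm_add_le _ _
        have h2 : ‖u + u' - (v + v')‖ ^ 2 ≤ 2 * ‖u - v‖ ^ 2 + 2 * ‖u' - v'‖ ^ 2 := by
          nlinarith [norm_nonneg (u + u' - (v + v')), sq_nonneg (‖u - v‖ - ‖u' - v'‖),
            norm_nonneg (u - v), norm_nonneg (u' - v')]
        have h3 : pk a θ * ‖u - v‖ ^ 2 ≤ (1 - ‖a‖ ^ 2) * K ^ 2 := by
          have hd := cpt_sub_pos ha θ
          calc pk a θ * ‖u - v‖ ^ 2 ≤ pk a θ * (K * ‖cpt θ - a‖) ^ 2 := by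
                have := pk_nonneg ha θ
                gcongr
                exact hlow θ
            _ = _ := by rw [pk]; field_simp
        have h4 := mul_le_mul_of_nonneg_left h2 (pk_nonneg ha θ)
        linarith
    _ = 2 * π * (2 * (1 - ‖a‖ ^ 2) * K ^ 2) + 2 * ∫ θ in (0:ℝ)..2 * π, (pk a θ *
      ‖∑ n ∈ Finset.range M, g' n * cpt θ ^ n - ∑ n ∈ Finset.range M, g' n * a ^ n‖ ^ 2) := by
        rw [intervalIntegral.integral_add, intervalIntegral.integral_const_mul]
        · simp; ring
        · exact intervalIntegrable_const
        · apply Continuous.intervalIntegrable; fun_prop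
    _ ≤ _ := by
        have := poly_dirichlet g' M ha
        rw [hD] at this
        linarith

lemma pk_B_bound {B : ℂ → ℂ} (hd : DifferentiableOn ℂ B (Metric.ball 0 1)) {r : ℝ} (h0 : 0 ≤ r)
    (h1 : r < 1) {a : ℂ} (ha : ‖a‖ < 1) (N : ℕ) {ε : ℝ}
    (hε : ∀ M, ∑ n ∈ Finset.Ico N M, n * ‖coef B n‖ ^ 2 ≤ ε) :
    ∫ θ in (0:ℝ)..2 * π, pk a θ * ‖B ((r : ℂ) * cpt θ) - B ((r : ℂ) * a)‖ ^ 2 ≤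
    2 * π * (2 * (1 - ‖a‖ ^ 2) * (∑ n ∈ Finset.range N, n * ‖coef B n‖) ^ 2 + 2 * ε) := by
  have hx1 : 0 < 1 - ‖a‖ ^ 2 := by nlinarith [norm_nonneg a]
  have hp := pk_cont ha
  have hcp := cpt_cont
  have hr : ‖(r : ℂ)‖ = r := by rw [Complex.norm_real, Real.norm_of_nonneg h0]
  set g : ℕ → ℂ := fun n => coef B n * (r : ℂ) ^ n with hg
  have hgn : ∀ n, ‖g n‖ ≤ ‖coef B n‖ := by
    intro n
    rw [hg, norm_mul, norm_pow, hr]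
    exact mul_le_of_le_one_right (norm_nonneg _) (pow_le_one₀ h0 h1.le)
  have hgs : Summable fun n => ‖g n‖ := by
    have := (coef_hasSum hd (z := (r : ℂ)) (by rw [hr]; exact h1)).summable
    exact this.norm
  set T := ∑' n, ‖g n‖ with hT
  have hlim : ∀ z : ℂ, ‖z‖ ≤ 1 → Tendsto (fun M => ∑ n ∈ Finset.range M, g n * z ^ n) atTop
      (nhds (B ((r : ℂ) * z))) := by
    intro z hz
    have hz' : ‖(r : ℂ) * z‖ < 1 := by
      rw [norm_mul, hr]
      nlinarith [norm_nonneg z]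
    have := (coef_hasSum hd hz').tendsto_sum_nat
    simpa [hg, mul_pow, mul_assoc] using this
  have hbd : ∀ (z : ℂ), ‖z‖ ≤ 1 → ∀ M, ‖∑ n ∈ Finset.range M, g n * z ^ n‖ ≤ T := by
    intro z hz M
    refine (norm_sum_le _ _).trans ((Finset.sum_le_sum (g := fun n => ‖g n‖) fun n _ => ?_).trans
      (hgs.sum_le_tsum _ fun _ _ => norm_nonneg _))
    rw [norm_mul, norm_pow]
    exact mul_le_of_le_one_right (norm_nonneg _) (pow_le_one₀ (norm_nonneg _) hz)
  have ht : Tendsto (fun M => ∫ θ in (0:ℝ)..2 * π, pk a θ *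
      ‖∑ n ∈ Finset.range M, g n * cpt θ ^ n - ∑ n ∈ Finset.range M, g n * a ^ n‖ ^ 2) atTop
      (nhds (∫ θ in (0:ℝ)..2 * π, pk a θ * ‖B ((r : ℂ) * cpt θ) - B ((r : ℂ) * a)‖ ^ 2)) := by
    apply intervalIntegral.tendsto_integral_filter_of_dominated_convergence
      (fun θ => pk a θ * (2 * T) ^ 2)
    · refine Eventually.of_forall fun M => Continuous.aestronglyMeasurable ?_
      fun_prop
    · refine Eventually.of_forall fun M => Eventually.of_forall fun θ _ => ?_
      have hpn := pk_nonneg ha θ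
      rw [Real.norm_of_nonneg (by positivity)]
      gcongr
      refine (norm_sub_le _ _).trans ?_
      have h3 := hbd _ (cpt_norm θ).le M
      have h4 := hbd _ ha.le M
      linarith
    · apply Continuous.intervalIntegrable
      fun_prop
    · refine Eventually.of_forall fun θ _ => ?_
      exact ((((hlim _ (cpt_norm θ).le).sub (hlim _ ha.le)).norm).pow 2).const_mul _
  apply le_of_tendsto ht
  filter_upwards [eventually_ge_atTop N] with M hM
  refine (poly_combined g hM ha).trans ?_
  have h5 : ∑ n ∈ Finset.Ico N M, n * ‖g n‖ ^ 2 ≤ ε := by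
    refine le_trans (Finset.sum_le_sum fun n _ => ?_) (hε M)
    have := hgn n
    gcongr
  have h6 : ∑ n ∈ Finset.range N, (n : ℝ) * ‖g n‖ ≤ ∑ n ∈ Finset.range N, n * ‖coef B n‖ := by
    refine Finset.sum_le_sum fun n _ => ?_
    have := hgn n
    gcongr
  have h7 : 0 ≤ ∑ n ∈ Finset.range N, (n : ℝ) * ‖g n‖ :=
    Finset.sum_nonneg fun n _ => by positivity
  gcongr

lemma inner_bound {B : ℂ → ℂ} (hB : IsInner B) {a : ℂ} (ha : ‖a‖ < 1) (N : ℕ) {ε : ℝ}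
    (hε : ∀ M, ∑ n ∈ Finset.Ico N M, n * ‖coef B n‖ ^ 2 ≤ ε) :
    1 - ‖B a‖ ^ 2 ≤
      2 * (1 - ‖a‖ ^ 2) * (∑ n ∈ Finset.range N, n * ‖coef B n‖) ^ 2 + 2 * ε := by
  obtain ⟨hd, hb, hl⟩ := hB
  have hp := pk_cont ha
  have hcp := cpt_cont
  have hmem : ∀ᶠ r : ℝ in nhdsWithin 1 (Iio 1), 0 ≤ r ∧ r < 1 := by
    have h1 : ∀ᶠ r : ℝ in nhdsWithin 1 (Iio 1), r ∈ Ioo (0:ℝ) 1 := Ioo_mem_nhdsLT one_pos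
    filter_upwards [h1] with r hr
    exact ⟨hr.1.le, hr.2⟩
  have hI : ∫ θ in (0:ℝ)..2 * π, pk a θ * (1:ℝ) ^ 2 = 2 * π := by
    have := pk_integral (G := fun _ => 1) diffContOnCl_const ha
    simp only [mul_one] at this
    rw [intervalIntegral.integral_ofReal] at this
    simp only [one_pow, mul_one]
    exact_mod_cast this
  have hl2 : ∀ᵐ θ : ℝ, θ ∈ uIoc 0 (2 * π) →
      Tendsto (fun r : ℝ => ‖B ((r:ℂ) * cpt θ)‖) (nhdsWithin 1 (Iio 1)) (nhds 1) := by
    rw [uIoc_of_le (by positivity), ← ae_restrict_iff' measurableSet_Ioc,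
      ← restrict_Ico_eq_restrict_Ioc]
    exact hl
  have ht : Tendsto (fun r : ℝ => ∫ θ in (0:ℝ)..2 * π, pk a θ * ‖B ((r : ℂ) * cpt θ)‖ ^ 2)
      (nhdsWithin 1 (Iio 1)) (nhds (2 * π)) := by
    suffices h : Tendsto (fun r : ℝ => ∫ θ in (0:ℝ)..2 * π, pk a θ * ‖B ((r : ℂ) * cpt θ)‖ ^ 2)
        (nhdsWithin 1 (Iio 1)) (nhds (∫ θ in (0:ℝ)..2 * π, pk a θ * (1:ℝ) ^ 2)) by
      rwa [hI] at h
    apply intervalIntegral.tendsto_integral_filter_of_dominated_convergence (fun θ => pk a θ)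
    · filter_upwards [hmem] with r hr
      exact (hp.mul ((cont_circle hd hr.1 hr.2).norm.pow 2)).aestronglyMeasurable
    · filter_upwards [hmem] with r hr
      refine Eventually.of_forall fun θ _ => ?_
      have hpn := pk_nonneg ha θ
      rw [Real.norm_of_nonneg (by positivity)]
      have h3 : ‖B ((r : ℂ) * cpt θ)‖ ≤ 1 := by
        apply hb
        rw [mem_ball_zero_iff, cpt, norm_rexp hr.1]
        exact hr.2
      exact mul_le_of_le_one_right hpn (pow_le_one₀ (norm_nonneg _) h3)
    · exact hp.intervalIntegrable _ _
    · filter_upwards [hl2] with θ hθ hm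
      exact ((hθ hm).pow 2).const_mul _
  have hta : Tendsto (fun r : ℝ => B ((r : ℂ) * a)) (nhdsWithin 1 (Iio 1)) (nhds (B a)) := by
    have hc : ContinuousAt B ((1:ℝ) * a) := by
      simp only [Complex.ofReal_one, one_mul]
      exact (hd.differentiableAt (Metric.isOpen_ball.mem_nhds (by simpa using ha))).continuousAt
    have hc2 : ContinuousAt (fun r : ℝ => B ((r : ℂ) * a)) 1 :=
      ContinuousAt.comp (f := fun r : ℝ => (r : ℂ) * a) (g := B) hc (by fun_prop)
    have := hc2.tendsto.mono_left (nhdsWithin_le_nhds (s := Iio 1))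
    simpa using this
  have hT := ht.sub ((hta.norm.pow 2).const_mul (2 * π))
  have hle := le_of_tendsto hT (b := 2 * π * (2 * (1 - ‖a‖ ^ 2) *
      (∑ n ∈ Finset.range N, n * ‖coef B n‖) ^ 2 + 2 * ε)) (by
    filter_upwards [hmem] with r hr
    have hmaps : ∀ z ∈ Metric.closedBall (0:ℂ) 1, (r : ℂ) * z ∈ Metric.ball (0:ℂ) 1 := by
      intro z hz
      rw [mem_closedBall_zero_iff] at hz
      rw [mem_ball_zero_iff, norm_mul, Complex.norm_real, Real.norm_of_nonneg hr.1]
      nlinarith [hr.1, hr.2, norm_nonneg z]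
    have hG : DiffContOnCl ℂ (fun z => B ((r : ℂ) * z)) (Metric.ball 0 1) := by
      apply DifferentiableOn.diffContOnCl
      rw [closure_ball _ one_ne_zero]
      exact hd.comp (by fun_prop) hmaps
    have h5 := pk_variance hG ha
    have h6 := pk_B_bound hd hr.1 hr.2 ha N hε
    rw [h5] at h6
    exact h6)
  have hpi : 0 < 2 * π := by positivity
  refine le_of_mul_le_mul_left ?_ hpi
  linarith

lemma bdry_of_summable {B : ℂ → ℂ} (hB : IsInner B)
    (hs : Summable fun n : ℕ => n * ‖coef B n‖ ^ 2) :
    Tendsto (fun z => ‖B z‖) bdry (nhds 1) := by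
  have hkey : ∀ ε > 0, ∀ᶠ z in bdry, 1 - ‖B z‖ ^ 2 < ε := by
    intro ε hε
    obtain ⟨N, hN⟩ : ∃ N : ℕ, ∀ M : ℕ, ∑ n ∈ Finset.Ico N M, (n:ℝ) * ‖coef B n‖ ^ 2 ≤ ε / 8 := by
      have h1 := hs.hasSum.tendsto_sum_nat
      obtain ⟨N, hN⟩ := (h1.eventually (lt_mem_nhds (show
        (∑' n : ℕ, (n:ℝ) * ‖coef B n‖ ^ 2) - ε / 8 < ∑' n : ℕ, (n:ℝ) * ‖coef B n‖ ^ 2 by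
          linarith))).exists
      refine ⟨N, fun M => ?_⟩
      rcases le_total N M with h | h
      · have h2 := hs.sum_le_tsum (Finset.range M) fun n _ => by positivity
        rw [← Finset.sum_range_add_sum_Ico _ h] at h2
        linarith
      · rw [Finset.Ico_eq_empty_of_le h]
        simp
        positivity
    set K := ∑ n ∈ Finset.range N, (n:ℝ) * ‖coef B n‖ with hK
    have h3 : Tendsto (fun z : ℂ => 2 * (1 - ‖z‖ ^ 2) * K ^ 2) bdry (nhds (2 * (1 - 1 ^ 2) * K ^ 2)) :=
      (((bdry_norm_tendsto.pow 2).const_sub 1).const_mul 2).mul_const _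
    have h4 : ∀ᶠ z in bdry, 2 * (1 - ‖z‖ ^ 2) * K ^ 2 < ε / 2 :=
      h3.eventually (gt_mem_nhds (by simp; positivity))
    have h5 : ∀ᶠ z in bdry, ‖z‖ < 1 := eventually_bdry_iff.2 ⟨0, one_pos, fun z _ h => h⟩
    filter_upwards [h4, h5] with z hz hz1
    have := inner_bound hB hz1 N hN
    linarith
  have h5 : ∀ᶠ z in bdry, ‖z‖ < 1 := eventually_bdry_iff.2 ⟨0, one_pos, fun z _ h => h⟩
  rw [Metric.tendsto_nhds]
  intro ε hε
  filter_upwards [hkey ε hε, h5] with z hz hz1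
  have h6 := hB.2.1 z (by simpa using hz1)
  rw [Real.dist_eq, abs_lt]
  constructor <;> nlinarith [norm_nonneg (B z)]

theorem inner_deriv_weak_L1_tilde_iff_finite_blaschke (B : ℂ → ℂ) (hB : IsInner B) :
    (∃ C > (0:ℝ), ∀ lam > (0:ℝ),
      volume {z ∈ Metric.ball (0:ℂ) 1 | lam * (1 - ‖z‖) < ‖deriv B z‖}
        ≤ ENNReal.ofReal (C / lam)) ↔
    IsFiniteBlaschkeProduct B := by
  constructor
  · rintro ⟨C, hC, hw⟩
    exact blaschke_of_bdry hB.1 (bdry_of_summable hB (dirichlet_bound hB.1 hB.2.1 hC hw))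
  · exact weak_of_blaschke
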